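/- arXiv:2003.09609 — 3 statements merged into one kernel-verified Lean document; each statement's English description precedes it below -/
import Mathlib

section
/- Let Θ be a real skew-symmetric n×n matrix, Λ an m×n complex matrix, and let S be the real n×n matrix whose (j,k) entry is the imaginary part of the (j,k) entry of Λ†Λ, where Λ† denotes the conjugate transpose of Λ. Let B be a real n×p matrix and T a complex p×p matrix. For any two real symmetric n×n matrices R₁ and R₂, set A₁ := 2Θ(R₁ + S) and A₂ := 2Θ(R₂ + S). Then, with all matrices viewed as complex matrices, the equation i·A₁Θ + i·ΘA₁ᵀ + B·T·Bᵀ = 0 holds if and only if i·A₂Θ + i·ΘA₂ᵀ + B·T·Bᵀ = 0. -/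
open Matrix

/-- The commutation-relation preservation condition
`i•A Θ + i•Θ Aᵀ + B T Bᵀ = 0` (over ℂ) for `A = 2Θ(R + S)` does not depend on the
choice of the real symmetric Hamiltonian matrix `R`. -/
theorem stmt1 (n m p : ℕ) (Θ : Matrix (Fin n) (Fin n) ℝ) (hΘ : Θᵀ = -Θ)
    (Λ : Matrix (Fin m) (Fin n) ℂ)
    (S : Matrix (Fin n) (Fin n) ℝ)
    (hS : ∀ j k, S j k = ((Λᴴ * Λ) j k).im)
    (B : Matrix (Fin n) (Fin p) ℝ) (T : Matrix (Fin p) (Fin p) ℂ)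
    (R₁ R₂ : Matrix (Fin n) (Fin n) ℝ) (hR₁ : R₁ᵀ = R₁) (hR₂ : R₂ᵀ = R₂)
    (A₁ A₂ : Matrix (Fin n) (Fin n) ℝ)
    (hA₁ : A₁ = (2 : ℝ) • (Θ * (R₁ + S)))
    (hA₂ : A₂ = (2 : ℝ) • (Θ * (R₂ + S))) :
    (Complex.I • ((A₁.map Complex.ofReal) * (Θ.map Complex.ofReal))
        + Complex.I • ((Θ.map Complex.ofReal) * (A₁.map Complex.ofReal)ᵀ)
        + (B.map Complex.ofReal) * T * (B.map Complex.ofReal)ᵀ = 0)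
      ↔
    (Complex.I • ((A₂.map Complex.ofReal) * (Θ.map Complex.ofReal))
        + Complex.I • ((Θ.map Complex.ofReal) * (A₂.map Complex.ofReal)ᵀ)
        + (B.map Complex.ofReal) * T * (B.map Complex.ofReal)ᵀ = 0) := by
  have key : ∀ R A : Matrix (Fin n) (Fin n) ℝ, Rᵀ = R → A = (2 : ℝ) • (Θ * (R + S)) →
      Complex.I • ((A.map Complex.ofReal) * (Θ.map Complex.ofReal))
        + Complex.I • ((Θ.map Complex.ofReal) * (A.map Complex.ofReal)ᵀ)
      = Complex.I • (((2 : ℝ) • (Θ * (S - Sᵀ) * Θ)).map Complex.ofReal) := by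
    intro R A hR hA
    have h : A * Θ + Θ * Aᵀ = (2 : ℝ) • (Θ * (S - Sᵀ) * Θ) := by
      rw [hA, transpose_smul, transpose_mul, transpose_add, hR, hΘ]
      simp only [smul_mul_assoc, mul_smul_comm, ← smul_add]
      congr 1
      noncomm_ring
    have e1 : (A * Θ).map Complex.ofReal = A.map Complex.ofReal * Θ.map Complex.ofReal :=
      Matrix.map_mul (f := Complex.ofRealHom)
    have e2 : (Θ * Aᵀ).map Complex.ofReal = Θ.map Complex.ofReal * Aᵀ.map Complex.ofReal :=
      Matrix.map_mul (f := Complex.ofRealHom)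
    rw [← h, Matrix.map_add _ Complex.ofReal_add, e1, e2, smul_add, transpose_map]
  rw [key R₁ A₁ hR₁ hA₁, key R₂ A₂ hR₂ hA₂]
end

section
/- Fix a real number g > 0, real constant matrices B (n×m), C (p×n), D (p×m), a continuous matrix-valued function A : ℝ → ℝ^{n×n}, and a differentiable symmetric-matrix-valued function P : ℝ → ℝ^{n×n} with derivative P′. Let β : ℝ → ℝᵐ be continuous and let x : ℝ → ℝⁿ be differentiable with x′(t) = A(t)x(t) + Bβ(t) for all t, and define z(t) := Cx(t) + Dβ(t). Suppose that for every t ∈ [0, T] the (n+m)×(n+m) symmetric block matrix with blocks [P′(t) + A(t)ᵀP(t) + P(t)A(t) + CᵀC, CᵀD + P(t)B; BᵀP(t) + DᵀC, DᵀD − g²I] is negative semidefinite. Then x(T)ᵀP(T)x(T) + ∫₀ᵀ (‖z(t)‖² − g²‖β(t)‖²) dt ≤ x(0)ᵀP(0)x(0). -/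
open Matrix

theorem stmt4_aux_tr {k l : ℕ} (M : Matrix (Fin k) (Fin l) ℝ) (u : Fin l → ℝ) (w : Fin k → ℝ) :
    u ⬝ᵥ (Mᵀ *ᵥ w) = (M *ᵥ u) ⬝ᵥ w := by
  rw [dotProduct_mulVec, vecMul_transpose]

theorem stmt4_aux_deriv {n : ℕ} (P P' : ℝ → Matrix (Fin n) (Fin n) ℝ)
    (x : ℝ → Fin n → ℝ) (x' : Fin n → ℝ) (t : ℝ)
    (hP : ∀ i j, HasDerivAt (fun s => P s i j) (P' t i j) t)
    (hx : HasDerivAt x x' t) :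
    HasDerivAt (fun s => x s ⬝ᵥ (P s *ᵥ x s))
      (x' ⬝ᵥ (P t *ᵥ x t) + x t ⬝ᵥ (P' t *ᵥ x t) + x t ⬝ᵥ (P t *ᵥ x')) t := by
  have hxi := hasDerivAt_pi.1 hx
  have h : HasDerivAt (fun s => ∑ i, x s i * ∑ j, P s i j * x s j)
      (∑ i, (x' i * (∑ j, P t i j * x t j)
        + x t i * ∑ j, (P' t i j * x t j + P t i j * x' j))) t :=
    HasDerivAt.fun_sum fun i _ => (hxi i).mul
      (HasDerivAt.fun_sum fun j _ => (hP i j).mul (hxi j))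
  convert h using 1
  all_goals simp only [dotProduct, mulVec, Finset.sum_add_distrib, mul_add, add_assoc]

/-- deterministic dissipation inequality with supply rate
`‖z‖² − g²‖β‖²` and storage function `x ↦ xᵀ P(t) x`, under the pointwise
negative-semidefiniteness of the block LMI matrix on `[0, T]`. -/
theorem stmt4 (n m p : ℕ) (g : ℝ) (hg : 0 < g)
    (B : Matrix (Fin n) (Fin m) ℝ) (C : Matrix (Fin p) (Fin n) ℝ)
    (D : Matrix (Fin p) (Fin m) ℝ)
    (A : ℝ → Matrix (Fin n) (Fin n) ℝ)
    (hAcont : ∀ i j, Continuous fun t => A t i j)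
    (P P' : ℝ → Matrix (Fin n) (Fin n) ℝ)
    (hPsymm : ∀ t, (P t)ᵀ = P t)
    (hPderiv : ∀ t, ∀ i j, HasDerivAt (fun s => P s i j) (P' t i j) t)
    (β : ℝ → Fin m → ℝ) (hβ : Continuous β)
    (x : ℝ → Fin n → ℝ)
    (hx : ∀ t, HasDerivAt x (A t *ᵥ x t + B *ᵥ β t) t)
    (z : ℝ → Fin p → ℝ) (hz : ∀ t, z t = C *ᵥ x t + D *ᵥ β t)
    (T : ℝ) (hT : 0 ≤ T)
    (hLMI : ∀ t ∈ Set.Icc (0 : ℝ) T, ∀ v : Fin n ⊕ Fin m → ℝ,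
      v ⬝ᵥ (Matrix.fromBlocks
        (P' t + (A t)ᵀ * P t + P t * A t + Cᵀ * C) (Cᵀ * D + P t * B)
        (Bᵀ * P t + Dᵀ * C)
        (Dᵀ * D - g ^ 2 • (1 : Matrix (Fin m) (Fin m) ℝ))).mulVec v ≤ 0) :
    x T ⬝ᵥ (P T).mulVec (x T)
        + ∫ t in (0 : ℝ)..T, ((∑ i, (z t i) ^ 2) - g ^ 2 * ∑ i, (β t i) ^ 2)
      ≤ x 0 ⬝ᵥ (P 0).mulVec (x 0) := by
  have hxc : Continuous x := continuous_iff_continuousAt.2 fun t => (hx t).continuousAt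
  have hzc : Continuous z := by
    have : z = fun t => C *ᵥ x t + D *ᵥ β t := funext hz
    rw [this]
    exact (continuous_const.matrix_mulVec hxc).add (continuous_const.matrix_mulVec hβ)
  have hsc : Continuous fun t => (∑ i, (z t i) ^ 2) - g ^ 2 * ∑ i, (β t i) ^ 2 := by
    fun_prop
  have hV : ∀ t, HasDerivAt (fun r => x r ⬝ᵥ (P r *ᵥ x r)
      + ∫ t in (0 : ℝ)..r, ((∑ i, (z t i) ^ 2) - g ^ 2 * ∑ i, (β t i) ^ 2)) _ t := fun t =>
    (stmt4_aux_deriv P P' x _ t (hPderiv t) (hx t)).add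
      (hsc.integral_hasStrictDerivAt 0 t).hasDerivAt
  have hanti := antitoneOn_of_deriv_nonpos (convex_Icc (0 : ℝ) T)
    (fun t _ => (hV t).continuousAt.continuousWithinAt)
    (fun t _ => (hV t).differentiableAt.differentiableWithinAt)
    (fun t ht => by
      rw [(hV t).deriv]
      have h := hLMI t (interior_subset ht) (Sum.elim (x t) (β t))
      have e1 : ∑ i, (z t i) ^ 2 = z t ⬝ᵥ z t := by simp [dotProduct, sq]
      have e2 : ∑ i, (β t i) ^ 2 = β t ⬝ᵥ β t := by simp [dotProduct, sq]
      have e3 : ∀ w, x t ⬝ᵥ (P t *ᵥ w) = (P t *ᵥ x t) ⬝ᵥ w := fun w => by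
        conv_lhs => rw [← hPsymm t]
        exact stmt4_aux_tr _ _ _
      rw [e1, e2, hz t]
      simp only [fromBlocks_mulVec, sumElim_dotProduct_sumElim, Sum.elim_comp_inl,
        Sum.elim_comp_inr, add_mulVec, sub_mulVec, smul_mulVec, one_mulVec, ← mulVec_mulVec,
        dotProduct_add, dotProduct_sub, dotProduct_smul, stmt4_aux_tr, smul_eq_mul] at h
      simp only [dotProduct_add, add_dotProduct, mulVec_add]
      rw [e3, e3] at h ⊢
      rw [dotProduct_comm (D *ᵥ β t) (C *ᵥ x t)] at h ⊢
      rw [dotProduct_comm (P t *ᵥ x t) (B *ᵥ β t),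
        dotProduct_comm (P t *ᵥ x t) (A t *ᵥ x t)] at h ⊢
      linarith)
  have := hanti (Set.left_mem_Icc.2 hT) (Set.right_mem_Icc.2 hT) hT
  simpa using this
end

section
/- Fix a real number g > 0, real constant matrices B (n×m), C (p×n), D (p×m), a continuous matrix-valued function A : ℝ → ℝ^{n×n}, and a differentiable symmetric-matrix-valued function P : ℝ → ℝ^{n×n} with derivative P′ such that P(t) is positive semidefinite for every t. Let β : ℝ → ℝᵐ be continuous and let x : ℝ → ℝⁿ be differentiable with x′(t) = A(t)x(t) + Bβ(t) for all t and x(0) = 0, and define z(t) := Cx(t) + Dβ(t). Suppose there exists ε > 0 such that for every t ∈ [0, T] the (n+m)×(n+m) symmetric block matrix with blocks [P′(t) + A(t)ᵀP(t) + P(t)A(t) + CᵀC + εI, CᵀD + P(t)B; BᵀP(t) + DᵀC, DᵀD − g²I + εI] is negative semidefinite. Then ∫₀ᵀ (‖z(t)‖² + ε‖x(t)‖² + ε‖β(t)‖²) dt ≤ g² ∫₀ᵀ ‖β(t)‖² dt. -/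
open Matrix

/-- strict dissipation inequality from zero initial state: the
`L²`-gain bound `g` from the disturbance `β` to the output `z`, given the strict
block LMI (with margin `ε`) on `[0, T]`. -/
theorem stmt5 (n m p : ℕ) (g : ℝ) (hg : 0 < g)
    (B : Matrix (Fin n) (Fin m) ℝ) (C : Matrix (Fin p) (Fin n) ℝ)
    (D : Matrix (Fin p) (Fin m) ℝ)
    (A : ℝ → Matrix (Fin n) (Fin n) ℝ)
    (hAcont : ∀ i j, Continuous fun t => A t i j)
    (P P' : ℝ → Matrix (Fin n) (Fin n) ℝ)
    (hPsymm : ∀ t, (P t)ᵀ = P t)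
    (hPpos : ∀ t, ∀ v : Fin n → ℝ, 0 ≤ v ⬝ᵥ (P t).mulVec v)
    (hPderiv : ∀ t, ∀ i j, HasDerivAt (fun s => P s i j) (P' t i j) t)
    (β : ℝ → Fin m → ℝ) (hβ : Continuous β)
    (x : ℝ → Fin n → ℝ)
    (hx : ∀ t, HasDerivAt x (A t *ᵥ x t + B *ᵥ β t) t)
    (hx0 : x 0 = 0)
    (z : ℝ → Fin p → ℝ) (hz : ∀ t, z t = C *ᵥ x t + D *ᵥ β t)
    (T : ℝ) (hT : 0 ≤ T)
    (ε : ℝ) (hε : 0 < ε)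
    (hLMI : ∀ t ∈ Set.Icc (0 : ℝ) T, ∀ v : Fin n ⊕ Fin m → ℝ,
      v ⬝ᵥ (Matrix.fromBlocks
        (P' t + (A t)ᵀ * P t + P t * A t + Cᵀ * C
            + ε • (1 : Matrix (Fin n) (Fin n) ℝ))
        (Cᵀ * D + P t * B)
        (Bᵀ * P t + Dᵀ * C)
        (Dᵀ * D - g ^ 2 • (1 : Matrix (Fin m) (Fin m) ℝ)
            + ε • (1 : Matrix (Fin m) (Fin m) ℝ))).mulVec v ≤ 0) :
    (∫ t in (0 : ℝ)..T,
        ((∑ i, (z t i) ^ 2) + ε * (∑ i, (x t i) ^ 2) + ε * ∑ i, (β t i) ^ 2))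
      ≤ g ^ 2 * ∫ t in (0 : ℝ)..T, ∑ i, (β t i) ^ 2 := by
  have hxc : Continuous x := continuous_iff_continuousAt.2 fun t => (hx t).continuousAt
  have hxi : ∀ i, Continuous fun t => x t i := fun i => (continuous_apply i).comp hxc
  have hβi : ∀ i, Continuous fun t => β t i := fun i => (continuous_apply i).comp hβ
  have hzc : Continuous z := by
    have : z = fun t => C *ᵥ x t + D *ᵥ β t := funext hz
    rw [this]
    exact (continuous_const.matrix_mulVec hxc).add (continuous_const.matrix_mulVec hβ)
  have hzi : ∀ i, Continuous fun t => z t i := fun i => (continuous_apply i).comp hzc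
  set f : ℝ → ℝ := fun t =>
    (∑ i, (z t i) ^ 2) + ε * (∑ i, (x t i) ^ 2) + ε * ∑ i, (β t i) ^ 2 with hf
  set b : ℝ → ℝ := fun t => ∑ i, (β t i) ^ 2 with hb
  have hbc : Continuous b := continuous_finsetSum _ fun i _ => (hβi i).pow 2
  have hfc : Continuous f :=
    ((continuous_finsetSum _ fun i _ => (hzi i).pow 2).add
      (continuous_const.mul (continuous_finsetSum _ fun i _ => (hxi i).pow 2))).add
      (continuous_const.mul hbc)
  have hhc : Continuous fun t => f t - g ^ 2 * b t := hfc.sub (continuous_const.mul hbc)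
  -- derivative of the storage function
  have hV : ∀ t, HasDerivAt (fun s => x s ⬝ᵥ P s *ᵥ x s)
      ((A t *ᵥ x t + B *ᵥ β t) ⬝ᵥ P t *ᵥ x t
        + x t ⬝ᵥ (P' t *ᵥ x t + P t *ᵥ (A t *ᵥ x t + B *ᵥ β t))) t := by
    intro t
    have hxd := hasDerivAt_pi.1 (hx t)
    generalize A t *ᵥ x t + B *ᵥ β t = y at hxd
    have h1 : ∀ i, HasDerivAt (fun s => (P s *ᵥ x s) i) ((P' t *ᵥ x t + P t *ᵥ y) i) t := by
      intro i
      have := HasDerivAt.fun_sum (u := Finset.univ)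
        fun j _ => (hPderiv t i j).fun_mul (hxd j)
      simpa [Matrix.mulVec, dotProduct, Finset.sum_add_distrib] using this
    have h2 := HasDerivAt.fun_sum (u := Finset.univ) fun i _ => (hxd i).fun_mul (h1 i)
    simpa only [dotProduct, Finset.sum_add_distrib] using h2
  have hW : ∀ t, HasDerivAt
      (fun s => x s ⬝ᵥ P s *ᵥ x s + ∫ r in (0 : ℝ)..s, (f r - g ^ 2 * b r))
      ((A t *ᵥ x t + B *ᵥ β t) ⬝ᵥ P t *ᵥ x t
        + x t ⬝ᵥ (P' t *ᵥ x t + P t *ᵥ (A t *ᵥ x t + B *ᵥ β t))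
        + (f t - g ^ 2 * b t)) t := fun t =>
    (hV t).fun_add (hhc.integral_hasStrictDerivAt 0 t).hasDerivAt
  have hsq : ∀ (k : ℕ) (v : Fin k → ℝ), ∑ i, (v i) ^ 2 = v ⬝ᵥ v := by
    intro k v
    simp [dotProduct, pow_two]
  have htr : ∀ (k l : ℕ) (M : Matrix (Fin k) (Fin l) ℝ) (v : Fin l → ℝ) (w : Fin k → ℝ),
      v ⬝ᵥ Mᵀ *ᵥ w = (M *ᵥ v) ⬝ᵥ w := by
    intro k l M v w
    rw [dotProduct_mulVec, vecMul_transpose]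
  have hneg : ∀ t ∈ Set.Icc (0 : ℝ) T, (A t *ᵥ x t + B *ᵥ β t) ⬝ᵥ P t *ᵥ x t
        + x t ⬝ᵥ (P' t *ᵥ x t + P t *ᵥ (A t *ᵥ x t + B *ᵥ β t))
        + (f t - g ^ 2 * b t) ≤ 0 := by
    intro t ht
    have h := hLMI t ht (Sum.elim (x t) (β t))
    rw [fromBlocks_mulVec, sumElim_dotProduct_sumElim] at h
    simp only [Sum.elim_comp_inl, Sum.elim_comp_inr, add_mulVec, sub_mulVec, smul_mulVec,
      one_mulVec, ← mulVec_mulVec, dotProduct_add, dotProduct_sub, dotProduct_smul, htr,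
      smul_eq_mul] at h
    simp only [hf, hb, hsq, hz, mulVec_add, dotProduct_add, add_dotProduct]
    linarith
  have hanti : AntitoneOn
      (fun s => x s ⬝ᵥ P s *ᵥ x s + ∫ r in (0 : ℝ)..s, (f r - g ^ 2 * b r))
      (Set.Icc 0 T) := by
    apply antitoneOn_of_deriv_nonpos (convex_Icc 0 T)
    · exact fun t _ => (hW t).continuousAt.continuousWithinAt
    · exact fun t _ => (hW t).differentiableAt.differentiableWithinAt
    · intro t ht
      rw [(hW t).deriv]
      exact hneg t (interior_subset ht)
  have hfin := hanti (Set.left_mem_Icc.2 hT) (Set.right_mem_Icc.2 hT) hT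
  simp only [hx0, zero_dotProduct, intervalIntegral.integral_same, add_zero] at hfin
  have hp := hPpos T (x T)
  have hgb : Continuous fun t => g ^ 2 * b t := continuous_const.mul hbc
  rw [intervalIntegral.integral_sub (hfc.intervalIntegrable _ _)
    (hgb.intervalIntegrable _ _),
    intervalIntegral.integral_const_mul] at hfin
  linarith
end
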